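/- Let d : P_k → P_{k+1} be as defined. Then d ∘ d = 0; the cohomology of the complex (P_•, d) vanishes at P_k for every 1 ≤ k ≤ n−1; and the cohomology at P_n (that is, the cokernel of d : P_{n−1} → P_n) is a one-dimensional K-vector space. -/

import Mathlib

/-!
After rescaling each basis vector by a sign (`gaugeSign`: the inversion sign of the ordered
partition times the parity of the sum of the partial sums `|I_1| + ⋯ + |I_i|`), the differential
becomes `(simpD f)(J) = ∑ t, (-1)^t f(J with blocks t and t + 1 merged)`; this is `permD_eq`. It is
the simplicial coboundary of the order complex of the proper part of the Boolean lattice, so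
`d ∘ d = 0` is the simplicial identity among merges (`simpD_simpD`).

The cohomology is computed by induction on `n`, following the element `0` of `Fin (n + 1)`. An
ordered partition is of one of three kinds: `0` shares its block (`insertFat`), `{0}` is a block but
not the first one, or `{0}` is the first block (both `insertSingle`). The cochains supported on the
third kind form a subcomplex isomorphic, up to a shift by one and a sign, to the complex of `n`
(`exists_extension`, `restrictFirst_simpD`).

The quotient by this subcomplex is acyclic. If `h` vanishes on partitions of the second kind, the
value of `simpD h` at such a partition, with `{0}` inserted at position `j + 1` into a partition `r`
of the other elements, is `±h(0 joined to block j of r) ± h(0 joined to block j + 1 of r)`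
(`simpD_insertSingle`). For fixed `r` this is a triangular system with `±1` on the diagonal. Its
solvability makes every cochain cohomologous to one vanishing on the second kind
(`exists_vanishSingle`), and uniqueness of its solution shows that a cocycle with this property
lies in the subcomplex (`suppFirst_of_vanishSingle`). Hence the cohomology for `n + 1` is that for
`n`, shifted by one, which yields `simpD_exact` and `simpD_coker`.
-/

/-!
STATEMENT 1: the cellular cochain complex of the `(n-1)`-dimensional permutahedron
(Saneblidze–Umble cell structure).

For `1 ≤ k ≤ n`, `P_k` has as basis the ordered partitions `(I_1,…,I_k)` of `{1,…,n}`
into `k` nonempty disjoint subsets.  We encode an ordered partition into `k` blocks as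
a surjection `g : Fin n → Fin k` (with `I_i = g⁻¹(i)`), and `P_k` as the space of
functions from the set of such surjections to `K` (coordinates w.r.t. the basis).

The differential `d : P_k → P_{k+1}` on basis elements is
`d(I_1,…,I_k) = ∑_{i=1}^{k} ∑_{I_i = I_i' ⊔ I_i''} (-1)^{i+1+|I_1|+⋯+|I_{i-1}|+|I_i'|}
ε(I_i',I_i'') (I_1,…,I_i',I_i'',…,I_k)`, where `ε(A,B) = (-1)^{#{(a,b) ∈ A×B | b < a}}`
is the sign of the shuffle taking `I_i` sorted to (`A` sorted followed by `B` sorted).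
In coordinates, `(d f)` evaluated at a `(k+1)`-block partition is the signed sum of the
values of `f` at the partitions obtained by merging two adjacent blocks.
-/

open Finset

/-- Ordered partitions of `{1,…,n}` into `k` nonempty blocks, encoded as surjections. -/
abbrev OrdPartition (n k : ℕ) := {g : Fin n → Fin k // Function.Surjective g}

/-- The space of cellular `k`-cochains of the permutahedron, in coordinates. -/
abbrev PermCochain (K : Type) [Field K] (n k : ℕ) := OrdPartition n k → K

/-- The order-preserving merge `Fin (k+1) → Fin k` collapsing `t` and `t+1`. -/
def mergeIdx {k : ℕ} (t : Fin k) : Fin (k + 1) → Fin k := fun j =>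
  if h : (j : ℕ) ≤ (t : ℕ) then ⟨j, lt_of_le_of_lt h t.isLt⟩
  else ⟨(j : ℕ) - 1, by omega⟩

lemma mergeIdx_surjective {k : ℕ} (t : Fin k) : Function.Surjective (mergeIdx t) := by
  intro j
  by_cases h : (j : ℕ) ≤ (t : ℕ)
  · exact ⟨⟨j, by omega⟩, by simp [mergeIdx, h]⟩
  · refine ⟨⟨(j : ℕ) + 1, by omega⟩, ?_⟩
    have h' : ¬ ((j : ℕ) + 1 ≤ (t : ℕ)) := by omega
    simp only [mergeIdx, h', dif_neg]
    exact Fin.ext (by simp)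

/-- The `i`-th block of the ordered partition encoded by `g`. -/
def block {n k : ℕ} (g : Fin n → Fin k) (i : Fin k) : Finset (Fin n) :=
  Finset.univ.filter (fun x => g x = i)

/-- `ε(A,B)`: the sign of the shuffle permutation taking `A ∪ B` listed in increasing
order to the list (`A` increasing, then `B` increasing); it equals `(-1)` to the number
of pairs `(a,b) ∈ A × B` with `b < a`. -/
def shuffleSign (K : Type) [Field K] {n : ℕ} (A B : Finset (Fin n)) : K :=
  (-1 : K) ^ ((A ×ˢ B).filter (fun p => p.2 < p.1)).card

/-- The permutahedron cochain differential `d : P_k → P_{k+1}` in coordinates: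
`(d f)(J_1,…,J_{k+1}) = ∑_{t=1}^{k} (-1)^{(t+1)+1+|J_1|+⋯+|J_{t-1}|+|J_t|}
ε(J_t,J_{t+1}) · f(J_1,…,J_t ⊔ J_{t+1},…,J_{k+1})`. -/
noncomputable def permD (K : Type) [Field K] (n k : ℕ) :
    PermCochain K n k →ₗ[K] PermCochain K n (k + 1) where
  toFun f g := ∑ t : Fin k,
    ((-1 : K) ^ ((t : ℕ) +
        ∑ j ∈ Finset.univ.filter (fun j : Fin (k + 1) => (j : ℕ) ≤ (t : ℕ)),
          (block g.1 j).card)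
      * shuffleSign K (block g.1 t.castSucc) (block g.1 t.succ))
      * f ⟨mergeIdx t ∘ g.1, (mergeIdx_surjective t).comp g.2⟩
  map_add' f g := by
    funext c
    simp [mul_add, Finset.sum_add_distrib]
  map_smul' r f := by
    funext c
    simp only [Pi.smul_apply, smul_eq_mul, RingHom.id_apply, Finset.mul_sum]
    exact Finset.sum_congr rfl fun t _ => by ring

/-! ### Removing the signs -/

lemma mergeIdx_val {k : ℕ} (t : Fin k) (j : Fin (k + 1)) :
    (mergeIdx t j : ℕ) = if (j : ℕ) ≤ t then (j : ℕ) else j - 1 := by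
  unfold mergeIdx; split_ifs <;> rfl

/-- The ordered partition obtained from `g` by merging the blocks `t` and `t + 1`. -/
def mergeAt {n k : ℕ} (t : Fin k) (g : OrdPartition n (k + 1)) : OrdPartition n k :=
  ⟨mergeIdx t ∘ g.1, (mergeIdx_surjective t).comp g.2⟩

@[simp] lemma mergeAt_val {n k : ℕ} (t : Fin k) (g : OrdPartition n (k + 1)) (x : Fin n) :
    (mergeAt t g).1 x = mergeIdx t (g.1 x) := rfl

/-- The differential with all signs stripped except `(-1)^t`. -/
noncomputable def simpD (K : Type) [Field K] (n k : ℕ) :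
    PermCochain K n k →ₗ[K] PermCochain K n (k + 1) where
  toFun f g := ∑ t : Fin k, (-1 : K) ^ (t : ℕ) * f (mergeAt t g)
  map_add' f g := by
    funext c
    simp [mul_add, Finset.sum_add_distrib]
  map_smul' r f := by
    funext c
    simp only [Pi.smul_apply, smul_eq_mul, RingHom.id_apply, Finset.mul_sum]
    exact Finset.sum_congr rfl fun t _ => by ring

lemma simpD_apply (K : Type) [Field K] (n k : ℕ) (f : PermCochain K n k)
    (g : OrdPartition n (k + 1)) :
    simpD K n k f g = ∑ t : Fin k, (-1 : K) ^ (t : ℕ) * f (mergeAt t g) := rfl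

/-- The number of inversions of the word listing the blocks of `g` in order. -/
def invCount {n k : ℕ} (g : Fin n → Fin k) : ℕ :=
  #{p : Fin n × Fin n | p.2 < p.1 ∧ g p.1 < g p.2}

/-- The sum of the partial sums `|I_1| + ⋯ + |I_i|` over `i = 1, …, k`, counted by elements. -/
def depthSum {n k : ℕ} (g : Fin n → Fin k) : ℕ := ∑ x, (k - (g x : ℕ))

/-- The rescaling sign of the basis vector `g`. Merging blocks `t` and `t + 1` changes it by
`ε(I_t, I_{t+1})` (through `invCount`) and by the parity of `|I_0| + ⋯ + |I_t|` (through
`depthSum`), which are the signs of `permD` other than `(-1)^t`. -/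
def gaugeSign (K : Type) [Field K] {n k : ℕ} (g : Fin n → Fin k) : K :=
  (-1 : K) ^ (invCount g + depthSum g)

lemma gaugeSign_mul_self (K : Type) [Field K] {n k : ℕ} (g : Fin n → Fin k) :
    gaugeSign K g * gaugeSign K g = 1 := by
  unfold gaugeSign
  rw [← pow_add, Even.neg_one_pow ⟨_, rfl⟩]

/-- Merging two adjacent blocks loses exactly the inversions between them. -/
lemma invCount_merge {n k : ℕ} (t : Fin k) (g : Fin n → Fin (k + 1)) :
    invCount g = invCount (mergeIdx t ∘ g) +
      #{p ∈ block g t.castSucc ×ˢ block g t.succ | p.2 < p.1} := by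
  unfold invCount
  rw [← Finset.card_union_of_disjoint]
  · congr 1
    ext ⟨x, y⟩
    simp only [block, Finset.mem_filter, Finset.mem_univ, true_and, Finset.mem_union,
      Finset.mem_product, Function.comp, Fin.lt_def, Fin.ext_iff, mergeIdx_val, Fin.val_castSucc,
      Fin.val_succ]
    split_ifs <;> omega
  · rw [Finset.disjoint_left]
    rintro ⟨x, y⟩
    simp only [block, Finset.mem_filter, Finset.mem_univ, true_and,
      Finset.mem_product, Function.comp, Fin.lt_def, Fin.ext_iff, mergeIdx_val, Fin.val_castSucc,
      Fin.val_succ]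
    split_ifs <;> omega

/-- Merging blocks `t` and `t + 1` removes the partial sum that ends with block `t`. -/
lemma depthSum_merge {n k : ℕ} (t : Fin k) (g : Fin n → Fin (k + 1)) :
    depthSum g = depthSum (mergeIdx t ∘ g) +
      ∑ j ∈ Finset.univ.filter (fun j : Fin (k + 1) => (j : ℕ) ≤ (t : ℕ)), (block g j).card := by
  have h : ∑ j ∈ Finset.univ.filter (fun j : Fin (k + 1) => (j : ℕ) ≤ (t : ℕ)), (block g j).card
      = ∑ x, if (g x : ℕ) ≤ t then 1 else 0 := by
    rw [← Finset.card_filter, Finset.card_eq_sum_card_fiberwise (f := g)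
      (t := Finset.univ.filter (fun j : Fin (k + 1) => (j : ℕ) ≤ (t : ℕ)))]
    · refine Finset.sum_congr rfl fun j hj => ?_
      congr 1
      ext x
      simp only [Finset.mem_filter, Finset.mem_univ, true_and, block] at hj ⊢
      constructor
      · rintro rfl; exact ⟨hj, rfl⟩
      · exact fun h => h.2
    · intro x hx
      simpa using hx
  rw [h]
  unfold depthSum
  rw [← Finset.sum_add_distrib]
  refine Finset.sum_congr rfl fun x _ => ?_
  have := (g x).isLt
  have := t.isLt
  simp only [Function.comp, mergeIdx_val]
  split_ifs <;> omega

/-- Rescaling of the basis by `gaugeSign`, an involution. -/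
noncomputable def rescale (K : Type) [Field K] (n k : ℕ) :
    PermCochain K n k →ₗ[K] PermCochain K n k where
  toFun f g := gaugeSign K g.1 * f g
  map_add' f g := by funext c; simp [mul_add]
  map_smul' r f := by funext c; simp [mul_left_comm]

lemma rescale_apply (K : Type) [Field K] (n k : ℕ) (f : PermCochain K n k) (g : OrdPartition n k) :
    rescale K n k f g = gaugeSign K g.1 * f g := rfl

lemma rescale_rescale (K : Type) [Field K] (n k : ℕ) (f : PermCochain K n k) :
    rescale K n k (rescale K n k f) = f := by
  funext g
  rw [rescale_apply, rescale_apply, ← mul_assoc, gaugeSign_mul_self, one_mul]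

/-- `permD` is conjugate to `simpD` by the rescaling. -/
lemma permD_eq (K : Type) [Field K] (n k : ℕ) (f : PermCochain K n k) :
    permD K n k f = rescale K n (k + 1) (simpD K n k (rescale K n k f)) := by
  funext g
  rw [rescale_apply, simpD_apply, Finset.mul_sum]
  change ∑ t : Fin k, _ * _ * f (mergeAt t g) = _
  refine Finset.sum_congr rfl fun t _ => ?_
  rw [rescale_apply]
  change _ = _ * (_ * (gaugeSign K (mergeIdx t ∘ g.1) * f (mergeAt t g)))
  have key : gaugeSign K g.1 * gaugeSign K (mergeIdx t ∘ g.1) =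
      (-1 : K) ^ (∑ j ∈ Finset.univ.filter (fun j : Fin (k + 1) => (j : ℕ) ≤ (t : ℕ)),
          (block g.1 j).card) * shuffleSign K (block g.1 t.castSucc) (block g.1 t.succ) := by
    have h1 := gaugeSign_mul_self K (mergeIdx t ∘ g.1)
    have h2 : gaugeSign K g.1 = gaugeSign K (mergeIdx t ∘ g.1) *
        ((-1 : K) ^ (∑ j ∈ Finset.univ.filter (fun j : Fin (k + 1) => (j : ℕ) ≤ (t : ℕ)),
          (block g.1 j).card) * shuffleSign K (block g.1 t.castSucc) (block g.1 t.succ)) := by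
      conv_lhs => unfold gaugeSign
      rw [invCount_merge t, depthSum_merge t]
      unfold gaugeSign shuffleSign
      ring
    rw [h2, mul_right_comm, h1, one_mul]
  rw [pow_add]
  linear_combination -((-1 : K) ^ (t : ℕ) * f (mergeAt t g)) * key

/-- The simplicial identity among merges, which pairs off the terms of `simpD ∘ simpD`. -/
lemma mergeAt_mergeAt {n k : ℕ} (s : Fin k) (t : Fin (k + 1)) (h : (s : ℕ) < t)
    (g : OrdPartition n (k + 2)) :
    mergeAt s (mergeAt t g) = mergeAt ⟨t - 1, by omega⟩ (mergeAt s.castSucc g) := by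
  apply Subtype.ext
  funext x
  apply Fin.ext
  simp only [mergeAt_val, mergeIdx_val, Fin.val_castSucc]
  split_ifs <;> omega

-- The involution sends `(t, s)` with `s < t` to `(s, t - 1)`, reversing the sign.
lemma simpD_simpD (K : Type) [Field K] (n k : ℕ) (f : PermCochain K n k) :
    simpD K n (k + 1) (simpD K n k f) = 0 := by
  funext g
  simp only [simpD_apply, Finset.mul_sum, Pi.zero_apply]
  rw [← Finset.sum_product']
  refine Finset.sum_involution
    (fun p _ => if h : (p.2 : ℕ) < p.1 then (p.2.castSucc, ⟨p.1 - 1, by omega⟩)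
      else (p.2.succ, ⟨p.1, by omega⟩)) ?_ ?_ ?_ ?_
  · rintro ⟨t, s⟩ -
    by_cases h : (s : ℕ) < t
    · simp only [h, dif_pos]
      rw [mergeAt_mergeAt s t h g]
      obtain ⟨t, ht⟩ := t
      cases t with
      | zero => simp at h
      | succ t => simp only [Fin.val_castSucc, Nat.add_sub_cancel]; ring
    · simp only [h, dif_neg, not_false_eq_true]
      rw [mergeAt_mergeAt ⟨t, by omega⟩ s.succ (by simp; omega) g]
      simp only [Fin.val_succ, Nat.add_sub_cancel, Fin.castSucc_mk]
      ring
  · rintro ⟨t, s⟩ - - heq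
    by_cases h : (s : ℕ) < t
    · simp only [h, dif_pos, Prod.mk.injEq, Fin.ext_iff, Fin.val_castSucc] at heq
      omega
    · simp only [h, dif_neg, not_false_eq_true, Prod.mk.injEq, Fin.ext_iff, Fin.val_succ] at heq
      omega
  · simp
  · rintro ⟨t, s⟩ -
    by_cases h : (s : ℕ) < t
    · have h' : ¬ ((t : ℕ) - 1 < s) := by omega
      simp only [h, h', dif_pos, dif_neg, Fin.val_castSucc, not_false_eq_true]
      exact Prod.ext (Fin.ext (by simp only [Fin.val_succ]; omega)) rfl
    · have h' : (t : ℕ) < s + 1 := by omega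
      simp only [h, h', dif_pos, dif_neg, Fin.val_succ, not_false_eq_true]
      exact Prod.ext rfl (Fin.ext (by simp))

/-! ### The position of the element `0` -/

/-- The element `0` forms a block of its own. -/
def IsSingle {n k : ℕ} (g : OrdPartition (n + 1) k) : Prop := ∀ x : Fin n, g.1 x.succ ≠ g.1 0

/-- The ordered partition of `Fin (n + 1)` obtained from a partition `r` of the nonzero elements by
putting `0` into the existing block `p`. -/
def insertFat {n k : ℕ} (p : Fin k) (r : OrdPartition n k) : OrdPartition (n + 1) k :=
  ⟨Fin.cons p r.1, fun j => by
    obtain ⟨x, hx⟩ := r.2 j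
    exact ⟨x.succ, by simpa using hx⟩⟩

/-- The ordered partition of `Fin (n + 1)` obtained from a partition `r` of the nonzero elements by
adding `{0}` as a new block in position `q`. -/
def insertSingle {n k : ℕ} (q : Fin (k + 1)) (r : OrdPartition n k) :
    OrdPartition (n + 1) (k + 1) :=
  ⟨Fin.cons q (q.succAbove ∘ r.1), fun j => by
    by_cases h : j = q
    · exact ⟨0, by simp [h]⟩
    · obtain ⟨i, hi⟩ := Fin.exists_succAbove_eq h
      obtain ⟨x, hx⟩ := r.2 i
      exact ⟨x.succ, by simp [hx, hi]⟩⟩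

@[simp] lemma insertFat_zero {n k : ℕ} (p : Fin k) (r : OrdPartition n k) :
    (insertFat p r).1 0 = p := rfl

@[simp] lemma insertFat_succ {n k : ℕ} (p : Fin k) (r : OrdPartition n k) (x : Fin n) :
    (insertFat p r).1 x.succ = r.1 x := rfl

@[simp] lemma insertSingle_zero {n k : ℕ} (q : Fin (k + 1)) (r : OrdPartition n k) :
    (insertSingle q r).1 0 = q := rfl

@[simp] lemma insertSingle_succ {n k : ℕ} (q : Fin (k + 1)) (r : OrdPartition n k) (x : Fin n) :
    (insertSingle q r).1 x.succ = q.succAbove (r.1 x) := rfl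

lemma isSingle_insertSingle {n k : ℕ} (q : Fin (k + 1)) (r : OrdPartition n k) :
    IsSingle (insertSingle q r) := fun x => by simp

lemma not_isSingle_insertFat {n k : ℕ} (p : Fin k) (r : OrdPartition n k) :
    ¬ IsSingle (insertFat p r) := fun h => by
  obtain ⟨x, hx⟩ := r.2 p
  exact h x (by simpa using hx)

lemma ordPartition_ext {n k : ℕ} {g g' : OrdPartition (n + 1) k} (h0 : g.1 0 = g'.1 0)
    (hs : ∀ x : Fin n, g.1 x.succ = g'.1 x.succ) : g = g' := by
  apply Subtype.ext
  funext x
  exact Fin.cases h0 hs x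

lemma surjective_tail {n k : ℕ} {g : OrdPartition (n + 1) k} (h : ¬ IsSingle g) :
    Function.Surjective (fun x : Fin n => g.1 x.succ) := by
  intro j
  obtain ⟨y, hy⟩ := g.2 j
  induction y using Fin.cases with
  | zero =>
    simp only [IsSingle, not_forall, not_not] at h
    obtain ⟨x, hx⟩ := h
    exact ⟨x, hx.trans hy⟩
  | succ x => exact ⟨x, hy⟩

lemma exists_eq_insertFat {n k : ℕ} {g : OrdPartition (n + 1) k} (h : ¬ IsSingle g) :
    ∃ r, g = insertFat (g.1 0) r :=
  ⟨⟨_, surjective_tail h⟩, ordPartition_ext rfl fun _ => rfl⟩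

lemma exists_eq_insertSingle {n k : ℕ} {g : OrdPartition (n + 1) (k + 1)} (h : IsSingle g) :
    ∃ r, g = insertSingle (g.1 0) r := by
  choose r hr using fun x => Fin.exists_succAbove_eq (h x)
  refine ⟨⟨r, fun j => ?_⟩, ordPartition_ext rfl fun x => (hr x).symm⟩
  obtain ⟨y, hy⟩ := g.2 ((g.1 0).succAbove j)
  induction y using Fin.cases with
  | zero => exact absurd hy.symm (Fin.succAbove_ne _ _)
  | succ x => exact ⟨x, Fin.succAbove_right_injective ((hr x).trans hy)⟩

/-- `f` vanishes wherever `{0}` is a block other than the first one. -/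
def VanishSingle {K : Type} [Field K] {n k : ℕ} (f : PermCochain K (n + 1) k) : Prop :=
  ∀ g, IsSingle g → (g.1 0 : ℕ) ≠ 0 → f g = 0

/-- `f` is supported on the ordered partitions whose first block is `{0}`. -/
def SuppFirst {K : Type} [Field K] {n k : ℕ} (f : PermCochain K (n + 1) k) : Prop :=
  ∀ g, ¬ (IsSingle g ∧ (g.1 0 : ℕ) = 0) → f g = 0

lemma SuppFirst.vanishSingle {K : Type} [Field K] {n k : ℕ} {f : PermCochain K (n + 1) k}
    (h : SuppFirst f) : VanishSingle f := fun g _ h0 => h g fun h' => h0 h'.2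

/-! ### Acyclicity away from the partitions with first block `{0}` -/

/-- Merging `{0}`, in position `j + 1`, with either neighbour puts `0` into block `j` or `j + 1`
of the remaining partition; all other merges leave `{0}` a block that is not the first. -/
lemma simpD_insertSingle {K : Type} [Field K] {n k : ℕ} {f : PermCochain K (n + 1) k}
    (hf : VanishSingle f) (j : Fin k) (r : OrdPartition n k) :
    simpD K (n + 1) k f (insertSingle j.succ r) = (-1) ^ (j : ℕ) * f (insertFat j r) +
      if h : (j : ℕ) + 1 < k then (-1) ^ ((j : ℕ) + 1) * f (insertFat ⟨j + 1, h⟩ r) else 0 := by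
  have hterm : ∀ t : Fin k, (-1 : K) ^ (t : ℕ) * f (mergeAt t (insertSingle j.succ r)) =
      (if t = j then (-1) ^ (t : ℕ) * f (insertFat t r) else 0) +
      (if (t : ℕ) = j + 1 then (-1) ^ (t : ℕ) * f (insertFat t r) else 0) := by
    intro t
    by_cases h : t = j ∨ (t : ℕ) = j + 1
    · have hm : mergeAt t (insertSingle j.succ r) = insertFat t r := by
        refine ordPartition_ext (Fin.ext ?_) fun x => Fin.ext ?_
        · simp only [mergeAt_val, insertSingle_zero, insertFat_zero, mergeIdx_val, Fin.val_succ]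
          rcases h with rfl | h
          · simp
          · simp [h]
        · simp only [mergeAt_val, insertSingle_succ, insertFat_succ, mergeIdx_val,
            Fin.succAbove, Fin.lt_def, Fin.val_succ, Fin.val_castSucc]
          rcases h with rfl | h <;> split_ifs <;>
            simp only [Fin.val_succ, Fin.val_castSucc] at * <;> omega
      rw [hm]
      rcases h with rfl | h
      · simp
      · have : t ≠ j := fun h' => by subst h'; omega
        simp [h, this]
    · push Not at h
      have h1 : (t : ℕ) ≠ j := fun h' => h.1 (Fin.ext h')
      rw [if_neg h.1, if_neg h.2, hf, mul_zero, add_zero]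
      · intro x hx
        apply isSingle_insertSingle j.succ r x
        rw [Fin.ext_iff] at hx ⊢
        have h2 := h.2
        simp only [mergeAt_val, mergeIdx_val, insertSingle_zero, Fin.val_succ] at hx ⊢
        split_ifs at hx <;> omega
      · have h2 := h.2
        simp only [mergeAt_val, mergeIdx_val, insertSingle_zero, Fin.val_succ]
        split_ifs <;> omega
  rw [simpD_apply, Finset.sum_congr rfl fun t _ => hterm t, Finset.sum_add_distrib,
    Finset.sum_ite_eq' Finset.univ j, if_pos (Finset.mem_univ _)]
  congr 1
  split_ifs with h
  · rw [Finset.sum_eq_single ⟨j + 1, h⟩]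
    · simp
    · intro t _ ht
      rw [if_neg]
      exact fun h' => ht (Fin.ext h')
    · simp
  · refine Finset.sum_eq_zero fun t _ => ?_
    rw [if_neg]
    omega

/-- Every cochain is cohomologous to one vanishing where `{0}` is a non-first block. The system for
the unknowns `h (insertFat j r)` is triangular in `j`, with solution
`∑_{i ≥ j} (-1)^i F (insertSingle (i + 1) r)`. -/
lemma exists_vanishSingle {K : Type} [Field K] {n k : ℕ} (F : PermCochain K (n + 1) (k + 1)) :
    ∃ h : PermCochain K (n + 1) k, VanishSingle (F - simpD K (n + 1) k h) := by
  classical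
  let S : OrdPartition n k → ℕ → K := fun r j =>
    ∑ i ∈ Finset.univ.filter (fun i : Fin k => j ≤ (i : ℕ)), (-1) ^ (i : ℕ) * F (insertSingle i.succ r)
  let h : PermCochain K (n + 1) k := fun g =>
    if hs : IsSingle g then 0 else
      S ⟨_, surjective_tail hs⟩ (g.1 0 : ℕ)
  have hfat : ∀ p r, h (insertFat p r) = S r p := by
    intro p r
    simp only [h, not_isSingle_insertFat, dif_neg, not_false_eq_true]
    rfl
  have hv : VanishSingle h := fun g hg _ => by simp only [h, hg, dif_pos]
  refine ⟨h, fun g hg h0 => ?_⟩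
  obtain ⟨r, hr⟩ := exists_eq_insertSingle hg
  obtain ⟨j, hj⟩ := Fin.exists_succ_eq.2 (fun h' : g.1 0 = 0 => h0 (by simp [h']))
  rw [← hj] at hr
  rw [hr, Pi.sub_apply, simpD_insertSingle hv, hfat]
  have hsq : (-1 : K) ^ (j : ℕ) * (-1) ^ (j : ℕ) = 1 := by
    rw [← pow_add, Even.neg_one_pow ⟨_, rfl⟩]
  have hS : S r j = (-1) ^ (j : ℕ) * F (insertSingle j.succ r) + S r (j + 1) := by
    simp only [S]
    rw [← Finset.sum_filter_add_sum_filter_not _ (fun i : Fin k => i = j)]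
    congr 1
    · rw [Finset.filter_filter, Finset.sum_eq_single j]
      · intro i hi hij
        simp [hij] at hi
      · simp
    · rw [Finset.filter_filter]
      refine Finset.sum_congr ?_ fun _ _ => rfl
      ext i
      simp only [Finset.mem_filter, Finset.mem_univ, true_and, Fin.ext_iff]
      omega
  split_ifs with hjk
  · rw [hfat, hS]
    linear_combination -F (insertSingle j.succ r) * hsq
  · have : S r (j + 1) = 0 := by
      refine Finset.sum_eq_zero fun i hi => ?_
      simp only [Finset.mem_filter] at hi
      omega
    rw [hS, this]
    linear_combination -F (insertSingle j.succ r) * hsq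

/-- The values at `insertFat j r` vanish by descending induction on `j`, since
`simpD_insertSingle` expresses the one at `j` through the one at `j + 1`. -/
lemma suppFirst_of_vanishSingle {K : Type} [Field K] {n k : ℕ} {f : PermCochain K (n + 1) k}
    (hf : VanishSingle f) (hdf : VanishSingle (simpD K (n + 1) k f)) : SuppFirst f := by
  have key : ∀ m : ℕ, ∀ (j : Fin k) (r : OrdPartition n k), k - (j : ℕ) ≤ m →
      f (insertFat j r) = 0 := by
    intro m
    induction m with
    | zero => intro j r hm; omega
    | succ m ih =>
      intro j r hm
      have h := simpD_insertSingle hf j r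
      rw [hdf _ (isSingle_insertSingle _ _) (by simp)] at h
      have h2 : (if h : (j : ℕ) + 1 < k then
          (-1 : K) ^ ((j : ℕ) + 1) * f (insertFat ⟨j + 1, h⟩ r) else 0) = 0 := by
        split_ifs with hj
        · rw [ih ⟨j + 1, hj⟩ r (by simp only; omega), mul_zero]
        · rfl
      rw [h2, add_zero] at h
      exact (mul_eq_zero.1 h.symm).resolve_left (pow_ne_zero _ (by simp))
  intro g hg
  by_cases hs : IsSingle g
  · exact hf g hs fun h0 => hg ⟨hs, h0⟩
  · obtain ⟨r, hr⟩ := exists_eq_insertFat hs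
    rw [hr]
    exact key k _ r (Nat.sub_le _ _)

/-! ### The subcomplex of cochains supported on first block `{0}` -/

lemma SuppFirst.simpD {K : Type} [Field K] {n k : ℕ} {f : PermCochain K (n + 1) k}
    (hf : SuppFirst f) : SuppFirst (simpD K (n + 1) k f) := by
  intro g hg
  rw [simpD_apply]
  refine Finset.sum_eq_zero fun t _ => ?_
  rw [hf, mul_zero]
  rintro ⟨hs, h0⟩
  refine hg ⟨fun x hx => hs x ?_, ?_⟩
  · rw [mergeAt_val, mergeAt_val, hx]
  · by_contra hne
    obtain ⟨y, hy⟩ := g.2 0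
    induction y using Fin.cases with
    | zero => simp [hy] at hne
    | succ x =>
      apply hs x
      apply Fin.ext
      rw [h0]
      simp [mergeIdx_val, hy]

/-- Restriction to the ordered partitions with first block `{0}`, which is then forgotten. -/
def restrictFirst (K : Type) [Field K] (n k : ℕ) :
    PermCochain K (n + 1) (k + 1) →ₗ[K] PermCochain K n k where
  toFun f r := f (insertSingle 0 r)
  map_add' _ _ := rfl
  map_smul' _ _ := rfl

lemma restrictFirst_apply {K : Type} [Field K] {n k : ℕ} (f : PermCochain K (n + 1) (k + 1))
    (r : OrdPartition n k) : restrictFirst K n k f r = f (insertSingle 0 r) := rfl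

lemma SuppFirst.ext {K : Type} [Field K] {n k : ℕ} {f f' : PermCochain K (n + 1) (k + 1)}
    (hf : SuppFirst f) (hf' : SuppFirst f')
    (h : restrictFirst K n k f = restrictFirst K n k f') : f = f' := by
  funext g
  by_cases hg : IsSingle g ∧ (g.1 0 : ℕ) = 0
  · obtain ⟨r, hr⟩ := exists_eq_insertSingle hg.1
    rw [show g.1 0 = 0 from Fin.ext hg.2] at hr
    rw [hr]
    exact congrFun h r
  · rw [hf g hg, hf' g hg]

lemma exists_extension {K : Type} [Field K] {n k : ℕ} (f : PermCochain K n k) :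
    ∃ F : PermCochain K (n + 1) (k + 1), SuppFirst F ∧ restrictFirst K n k F = f := by
  classical
  have hinj : Function.Injective (fun r : OrdPartition n k => insertSingle 0 r) := by
    intro r r' h
    apply Subtype.ext
    funext x
    have := congrFun (congrArg Subtype.val h) x.succ
    simpa using this
  refine ⟨Function.extend (fun r : OrdPartition n k => insertSingle 0 r) f 0, ?_, ?_⟩
  · intro g hg
    rw [Function.extend_apply']
    · rfl
    · rintro ⟨r, rfl⟩
      exact hg ⟨isSingle_insertSingle _ _, rfl⟩
  · funext r
    exact hinj.extend_apply f 0 r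

/-- Passing to the first block `{0}` shifts positions by one, so it anticommutes with the
differential. -/
lemma restrictFirst_simpD {K : Type} [Field K] {n k : ℕ} {f : PermCochain K (n + 1) (k + 1)}
    (hf : SuppFirst f) :
    restrictFirst K n (k + 1) (simpD K (n + 1) (k + 1) f) =
      - simpD K n k (restrictFirst K n k f) := by
  funext r
  rw [restrictFirst_apply, simpD_apply, Fin.sum_univ_succ, hf, mul_zero, zero_add, Pi.neg_apply,
    simpD_apply, ← Finset.sum_neg_distrib]
  · refine Finset.sum_congr rfl fun t _ => ?_
    have : mergeAt t.succ (insertSingle 0 r) = insertSingle 0 (mergeAt t r) := by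
      refine ordPartition_ext (Fin.ext ?_) fun x => Fin.ext ?_
      · simp [mergeIdx_val]
      · simp only [mergeAt_val, mergeIdx_val, insertSingle_succ, Fin.succAbove_zero, Fin.val_succ]
        split_ifs <;> omega
    rw [this, restrictFirst_apply, Fin.val_succ, pow_succ]
    ring
  · rintro ⟨hs, -⟩
    obtain ⟨x, hx⟩ := r.2 0
    apply hs x
    apply Fin.ext
    simp [mergeIdx_val, hx]

/-! ### Induction on the number of elements -/

lemma simpD_exact (K : Type) [Field K] (n : ℕ) : ∀ k : ℕ, k + 1 < n →
    ∀ f : PermCochain K n (k + 1), simpD K n (k + 1) f = 0 → ∃ h, simpD K n k h = f := by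
  induction n with
  | zero => intro k hk; omega
  | succ n ih =>
    intro k hk f hf
    obtain ⟨h₁, hh₁⟩ := exists_vanishSingle f
    set f₁ := f - simpD K (n + 1) k h₁ with hf₁
    have hd : simpD K (n + 1) (k + 1) f₁ = 0 := by
      rw [hf₁, map_sub, hf, simpD_simpD, sub_zero]
    have hs : SuppFirst f₁ := suppFirst_of_vanishSingle hh₁ (by rw [hd]; intro _ _ _; rfl)
    have hr := restrictFirst_simpD hs
    rw [hd, map_zero, eq_comm, neg_eq_zero] at hr
    suffices ∃ h₂, simpD K (n + 1) k h₂ = f₁ by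
      obtain ⟨h₂, hh₂⟩ := this
      exact ⟨h₁ + h₂, by rw [map_add, hh₂, hf₁, add_sub_cancel]⟩
    cases k with
    | zero =>
      -- `n > 0`, so there are no partitions of `Fin n` into zero blocks and `f₁ = 0`
      refine ⟨0, ?_⟩
      rw [map_zero]
      refine SuppFirst.ext (fun _ _ => rfl) hs ?_
      funext r
      exact (r.1 ⟨0, by omega⟩).elim0
    | succ k =>
      obtain ⟨h', hh'⟩ := ih k (by omega) _ hr
      obtain ⟨H, hH, hHr⟩ := exists_extension (-h')
      refine ⟨H, hH.simpD.ext hs ?_⟩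
      rw [restrictFirst_simpD hH, hHr, map_neg, neg_neg, hh']

/-- The top cokernel is spanned by the class of a single cochain `v` that is not a coboundary. -/
lemma simpD_coker (K : Type) [Field K] (m : ℕ) : ∃ v : PermCochain K (m + 1) (m + 1),
    (¬ ∃ h, simpD K (m + 1) m h = v) ∧ ∀ w, ∃ c : K, ∃ h, simpD K (m + 1) m h = w - c • v := by
  induction m with
  | zero =>
    have huniq : ∀ g g' : OrdPartition 1 1, g = g' := fun g g' =>
      Subtype.ext (funext fun _ => Subsingleton.elim _ _)
    refine ⟨fun _ => 1, ?_, fun w => ⟨w ⟨id, Function.surjective_id⟩, 0, ?_⟩⟩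
    · rintro ⟨h, hh⟩
      have := congrFun hh ⟨id, Function.surjective_id⟩
      simp [simpD_apply] at this
    · funext g
      simp [huniq g ⟨id, Function.surjective_id⟩]
  | succ m ih =>
    obtain ⟨v, hv, hw⟩ := ih
    obtain ⟨V, hV, hVr⟩ := exists_extension v
    refine ⟨V, ?_, fun w => ?_⟩
    · rintro ⟨h, hh⟩
      obtain ⟨h₁, hh₁⟩ := exists_vanishSingle h
      have hd : simpD K (m + 2) (m + 1) (h - simpD K (m + 2) m h₁) = V := by
        rw [map_sub, simpD_simpD, sub_zero, hh]
      have hs := suppFirst_of_vanishSingle hh₁ (by rw [hd]; exact hV.vanishSingle)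
      apply hv
      refine ⟨-restrictFirst K (m + 1) m (h - simpD K (m + 2) m h₁), ?_⟩
      rw [map_neg, ← restrictFirst_simpD hs, hd, hVr]
    · obtain ⟨h₁, hh₁⟩ := exists_vanishSingle w
      have hs : SuppFirst (w - simpD K (m + 2) (m + 1) h₁) := by
        refine suppFirst_of_vanishSingle hh₁ fun g _ _ => ?_
        -- there is no surjection from `m + 2` elements onto `m + 3`
        have := Fintype.card_le_of_surjective _ g.2
        simp at this
      obtain ⟨c, h', hh'⟩ := hw (restrictFirst K (m + 1) (m + 1) (w - simpD K (m + 2) (m + 1) h₁))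
      obtain ⟨H, hH, hHr⟩ := exists_extension (-h')
      refine ⟨c, h₁ + H, ?_⟩
      have : simpD K (m + 2) (m + 1) H = w - simpD K (m + 2) (m + 1) h₁ - c • V := by
        refine hH.simpD.ext (fun g hg => ?_) ?_
        · rw [Pi.sub_apply, hs g hg, Pi.smul_apply, hV g hg, smul_zero, sub_zero]
        · rw [restrictFirst_simpD hH, hHr, map_neg, neg_neg, hh', map_sub _ _ (c • V), map_smul, hVr]
      rw [map_add, this]
      abel

/-- `d ∘ d = 0`; the cohomology of `(P_•, d)` vanishes at `P_k` for
`1 ≤ k ≤ n-1`; and the cokernel of `d : P_{n-1} → P_n` is one-dimensional. -/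
theorem permutahedron_cochain_cohomology (K : Type) [Field K] (n : ℕ) (hn : 1 ≤ n) :
    (∀ k : ℕ, (permD K n (k + 1)).comp (permD K n k) = 0) ∧
    (∀ k : ℕ, k + 1 ≤ n - 1 →
      LinearMap.ker (permD K n (k + 1)) = LinearMap.range (permD K n k)) ∧
    (∀ m : ℕ, n = m + 1 →
      Module.finrank K (PermCochain K n (m + 1) ⧸ LinearMap.range (permD K n m)) = 1) := by
  have hdd : ∀ k : ℕ, (permD K n (k + 1)).comp (permD K n k) = 0 := fun k => by
    refine LinearMap.ext fun f => ?_
    rw [LinearMap.comp_apply, permD_eq, permD_eq, rescale_rescale, simpD_simpD, map_zero,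
      LinearMap.zero_apply]
  refine ⟨hdd, fun k hk => le_antisymm (fun f hf => ?_) ?_, ?_⟩
  · rw [LinearMap.mem_ker, permD_eq] at hf
    have hf' := congrArg (rescale K n (k + 2)) hf
    rw [rescale_rescale, map_zero] at hf'
    obtain ⟨h, hh⟩ := simpD_exact K n k (by omega) _ hf'
    refine ⟨rescale K n k h, ?_⟩
    rw [permD_eq, rescale_rescale, hh, rescale_rescale]
  · rintro _ ⟨h, rfl⟩
    exact LinearMap.congr_fun (hdd k) h
  · rintro m rfl
    obtain ⟨v, hv, hw⟩ := simpD_coker K m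
    refine finrank_eq_one (Submodule.Quotient.mk (rescale K (m + 1) (m + 1) v)) ?_ fun q => ?_
    · rw [Ne, Submodule.Quotient.mk_eq_zero]
      rintro ⟨h, hh⟩
      rw [permD_eq] at hh
      apply hv
      refine ⟨rescale K (m + 1) m h, ?_⟩
      rw [← rescale_rescale K _ _ (simpD K _ _ _), hh, rescale_rescale]
    · obtain ⟨w, rfl⟩ := Submodule.Quotient.mk_surjective _ q
      obtain ⟨c, h, hh⟩ := hw (rescale K (m + 1) (m + 1) w)
      refine ⟨c, ?_⟩
      rw [← Submodule.Quotient.mk_smul, eq_comm, Submodule.Quotient.eq]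
      refine ⟨rescale K (m + 1) m h, ?_⟩
      rw [permD_eq, rescale_rescale, hh, map_sub, rescale_rescale, map_smul]
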